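/- arXiv:dg-ga/9709004 — 3 statements merged into one kernel-verified Lean document; each statement's English description precedes it below -/
import Mathlib

section
/- Let 𝔤 be a semisimple Lie algebra of even dimension 2n. Then 𝔤 admits no symplectic form, i.e. there is no closed 2-cochain ω ∈ Λ²𝔤* (with respect to the Chevalley-Eilenberg differential) satisfying ω^n ≠ 0. -/
open scoped TensorProduct

variable {V : Type*} [AddCommGroup V] [Module ℝ V]

noncomputable def wedgeF {k l : ℕ} (f : V [⋀^Fin k]→ₗ[ℝ] ℝ) (g : V [⋀^Fin l]→ₗ[ℝ] ℝ) :
    V [⋀^Fin (k + l)]→ₗ[ℝ] ℝ :=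
  ((TensorProduct.lid ℝ ℝ).toLinearMap.compAlternatingMap (f.domCoprod g)).domDomCongr
    finSumFinEquiv

noncomputable def wpowF (ω : V [⋀^Fin 2]→ₗ[ℝ] ℝ) : (n : ℕ) → V [⋀^Fin (2 * n)]→ₗ[ℝ] ℝ
  | 0 => AlternatingMap.constOfIsEmpty ℝ V (Fin 0) 1
  | n + 1 => wedgeF (wpowF ω n) ω

noncomputable def oneAlt (α : Module.Dual ℝ V) : V [⋀^Fin 1]→ₗ[ℝ] ℝ :=
  AlternatingMap.ofSubsingleton ℝ V ℝ 0 α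

noncomputable def bilinToAlt (B : V →ₗ[ℝ] V →ₗ[ℝ] ℝ) (hB : ∀ x, B x x = 0) :
    V [⋀^Fin 2]→ₗ[ℝ] ℝ where
  toFun v := B (v 0) (v 1)
  map_update_add' := by
    intro _ v i x y
    fin_cases i <;> simp
  map_update_smul' := by
    intro _ v i c x
    fin_cases i <;> simp
  map_eq_zero_of_eq' := by
    intro v i j hij hne
    have h01 : v 0 = v 1 := by
      fin_cases i <;> fin_cases j <;> simp_all
    show B (v 0) (v 1) = 0
    rw [h01]; exact hB _

variable {L : Type*} [LieRing L] [LieAlgebra ℝ L]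

noncomputable def ceD (α : Module.Dual ℝ L) : L [⋀^Fin 2]→ₗ[ℝ] ℝ :=
  bilinToAlt
    (LinearMap.mk₂ ℝ (fun x y => -α ⁅x, y⁆)
      (fun x x' y => by simp [add_lie]; exact add_comm _ _)
      (fun c x y => by simp [smul_lie])
      (fun x y y' => by simp [lie_add]; exact add_comm _ _)
      (fun c x y => by simp [lie_smul]))
    (fun x => by simp)

/-- closedness of a 2-cochain under the Chevalley–Eilenberg differential -/
def IsCEClosed (ω : L [⋀^Fin 2]→ₗ[ℝ] ℝ) : Prop :=
  ∀ x y z : L, ω ![⁅x, y⁆, z] - ω ![⁅x, z⁆, y] + ω ![⁅y, z⁆, x] = 0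

theorem alt2_swap (ω : V [⋀^Fin 2]→ₗ[ℝ] ℝ) (x y : V) : ω ![x, y] = - ω ![y, x] := by
  have h := ω.map_swap ![y, x] (i := 0) (j := 1) (by decide)
  rw [← h]
  congr 1
  funext i
  fin_cases i <;> simp

theorem alt2_add (ω : V [⋀^Fin 2]→ₗ[ℝ] ℝ) (x x' y : V) :
    ω ![x + x', y] = ω ![x, y] + ω ![x', y] := by
  simpa using ω.toMultilinearMap.cons_add ![y] x x'

theorem alt2_smul (ω : V [⋀^Fin 2]→ₗ[ℝ] ℝ) (c : ℝ) (x y : V) :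
    ω ![c • x, y] = c * ω ![x, y] := by
  simpa using ω.toMultilinearMap.cons_smul ![y] c x

/-- the bilinear form of an alternating 2-form -/
noncomputable def altBilin (ω : V [⋀^Fin 2]→ₗ[ℝ] ℝ) : V →ₗ[ℝ] V →ₗ[ℝ] ℝ :=
  LinearMap.mk₂ ℝ (fun x y => ω ![x, y])
    (fun x x' y => alt2_add ω x x' y)
    (fun c x y => alt2_smul ω c x y)
    (fun x y y' => by
      rw [alt2_swap, alt2_add, alt2_swap ω x y, alt2_swap ω x y']; ring)
    (fun c x y => by
      rw [alt2_swap, alt2_smul, alt2_swap ω x y, smul_eq_mul]; ring)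

theorem wedgeF_ker {k l : ℕ} (f : V [⋀^Fin k]→ₗ[ℝ] ℝ) (g : V [⋀^Fin l]→ₗ[ℝ] ℝ) (a : V)
    (hf : ∀ v i, v i = a → f v = 0) (hg : ∀ v i, v i = a → g v = 0)
    (v : Fin (k + l) → V) (i : Fin (k + l)) (hv : v i = a) : wedgeF f g v = 0 := by
  unfold wedgeF
  rw [AlternatingMap.domDomCongr_apply, LinearMap.compAlternatingMap_apply,
    AlternatingMap.domCoprod_apply, MultilinearMap.sum_apply]
  rw [Finset.sum_eq_zero, map_zero]
  intro σ _
  induction σ using Quotient.inductionOn' with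
  | h σ =>
    rw [AlternatingMap.domCoprod.summand_mk'']
    rw [MultilinearMap.smul_apply, MultilinearMap.domDomCongr_apply,
      MultilinearMap.domCoprod_apply]
    obtain ⟨j, hj⟩ := (σ.trans finSumFinEquiv).surjective i
    rcases j with j | j
    · rw [show (f : MultilinearMap ℝ (fun _ : Fin k => V) ℝ) _ = 0 from
        hf _ j (by simpa [← hj] using hv)]
      simp
    · rw [show (g : MultilinearMap ℝ (fun _ : Fin l => V) ℝ) _ = 0 from
        hg _ j (by simpa [← hj] using hv)]
      simp

theorem alt2_ker (ω : V [⋀^Fin 2]→ₗ[ℝ] ℝ) (a : V) (h : ∀ y, ω ![a, y] = 0)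
    (v : Fin 2 → V) (i : Fin 2) (hv : v i = a) : ω v = 0 := by
  have e : v = ![v 0, v 1] := by funext i; fin_cases i <;> rfl
  rw [e]
  fin_cases i
  · simp only [Fin.zero_eta] at hv
    rw [hv, h]
  · simp only [Fin.mk_one] at hv
    rw [hv, alt2_swap, h, neg_zero]

theorem wpowF_ker (ω : V [⋀^Fin 2]→ₗ[ℝ] ℝ) (a : V) (h : ∀ y, ω ![a, y] = 0) (n : ℕ) :
    ∀ (v : Fin (2 * n) → V) (i : Fin (2 * n)), v i = a → wpowF ω n v = 0 := by
  induction n with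
  | zero => intro v i; exact i.elim0
  | succ n ih => exact fun v i hv => wedgeF_ker _ _ a ih (alt2_ker ω a h) v i hv

theorem top_form_zero [FiniteDimensional ℝ V] {m : ℕ} (hm : Module.finrank ℝ V = m)
    (f : V [⋀^Fin m]→ₗ[ℝ] ℝ) (a : V) (ha : a ≠ 0) (h : ∀ v i, v i = a → f v = 0) : f = 0 := by
  have hli : LinearIndepOn ℝ id ({a} : Set V) := LinearIndepOn.singleton ha
  let b := Module.Basis.extend hli
  have hfin : Fintype (hli.extend (Set.subset_univ _)) := FiniteDimensional.fintypeBasisIndex b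
  have hcard : Fintype.card (hli.extend (Set.subset_univ _)) = m := by
    rw [← hm, Module.finrank_eq_card_basis b]
  let e := Fintype.equivFinOfCardEq hcard
  let c := b.reindex e
  have hmem : a ∈ hli.extend (Set.subset_univ _) := hli.subset_extend _ rfl
  have hc : c (e ⟨a, hmem⟩) = a := by simp [c, b]
  rw [← f.map_basis_eq_zero_iff c]
  exact h _ _ hc

theorem exists_inner [FiniteDimensional ℝ L] [LieAlgebra.IsSemisimple ℝ L]
    (ω : L [⋀^Fin 2]→ₗ[ℝ] ℝ) (hω : IsCEClosed ω) :
    ∃ a : L, ∀ x y, ω ![x, y] = killingForm ℝ L ⁅a, x⁆ y := by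
  have hnd := LieAlgebra.IsKilling.killingForm_nondegenerate ℝ L
  let T := LinearMap.BilinForm.toDual (killingForm ℝ L) hnd
  let D : L →ₗ[ℝ] L := T.symm.toLinearMap ∘ₗ altBilin ω
  have hD : ∀ x y, killingForm ℝ L (D x) y = ω ![x, y] := by
    intro x y
    have : T (D x) = altBilin ω x := by simp [D]
    have h2 := congrArg (fun g => g y) this
    simpa [T, LinearMap.BilinForm.toDual_def, altBilin] using h2
  let D' : LieDerivation ℝ L L := ⟨D, by
    intro x y
    apply T.injective
    ext z
    simp only [T, LinearMap.BilinForm.toDual_def, map_sub, LinearMap.sub_apply]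
    have h1 : killingForm ℝ L ⁅x, D y⁆ z = - killingForm ℝ L (D y) ⁅x, z⁆ := by
      rw [← lie_skew, map_neg, LinearMap.neg_apply]
      exact congrArg _ (LieModule.traceForm_apply_lie_apply ℝ L L _ _ _)
    have h2 : killingForm ℝ L ⁅y, D x⁆ z = - killingForm ℝ L (D x) ⁅y, z⁆ := by
      rw [← lie_skew, map_neg, LinearMap.neg_apply]
      exact congrArg _ (LieModule.traceForm_apply_lie_apply ℝ L L _ _ _)
    rw [h1, h2, hD, hD, hD]
    have := hω x y z
    rw [alt2_swap ω y, alt2_swap ω x]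
    linarith⟩
  obtain ⟨a, ha⟩ := LieDerivation.IsKilling.exists_eq_ad D'
  refine ⟨a, fun x y => ?_⟩
  rw [← hD]
  have : D' x = ⁅a, x⁆ := by rw [← ha]; simp
  rw [← this]
  rfl

/-- a semisimple Lie algebra of dimension 2n admits no symplectic form. -/
theorem stmt3 [FiniteDimensional ℝ L] [LieAlgebra.IsSemisimple ℝ L] (n : ℕ) (hn : 0 < n)
    (hdim : Module.finrank ℝ L = 2 * n) :
    ¬ ∃ ω : L [⋀^Fin 2]→ₗ[ℝ] ℝ, IsCEClosed ω ∧ wpowF ω n ≠ 0 := by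
  rintro ⟨ω, hω, hne⟩
  obtain ⟨a, ha⟩ := exists_inner ω hω
  apply hne
  by_cases h0 : a = 0
  · have : Nontrivial L := Module.nontrivial_of_finrank_pos (R := ℝ) (by omega)
    obtain ⟨b, hb⟩ := exists_ne (0 : L)
    exact top_form_zero hdim _ b hb (wpowF_ker ω b (fun y => by simp [ha, h0]) n)
  · exact top_form_zero hdim _ a h0 (wpowF_ker ω a (fun y => by simp [ha]) n)
end

section
/- Let 𝔥 be a semisimple Lie algebra which is an ideal of codimension 1 in a Lie algebra 𝔤 of dimension 2n. Then 𝔤 admits no symplectic form. (Key steps: every derivation of 𝔥 is inner and H¹(𝔥;ℝ) = 0, forcing any closed extension data to degenerate.) -/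
open scoped TensorProduct

variable {V : Type*} [AddCommGroup V] [Module ℝ V]

variable {L : Type*} [LieRing L] [LieAlgebra ℝ L]

theorem wedgeF_kill {k l : ℕ} (f : V [⋀^Fin k]→ₗ[ℝ] ℝ) (g : V [⋀^Fin l]→ₗ[ℝ] ℝ) (t : V)
    (hf : ∀ v i, v i = t → f v = 0) (hg : ∀ v i, v i = t → g v = 0) :
    ∀ v i, v i = t → wedgeF f g v = 0 := by
  intro v i hi
  unfold wedgeF
  rw [AlternatingMap.domDomCongr_apply, LinearMap.compAlternatingMap_apply,
    AlternatingMap.domCoprod_apply, _root_.sum_apply, Finset.sum_eq_zero, map_zero]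
  intro σ _
  induction σ using Quotient.inductionOn' with | _ σ
  rw [AlternatingMap.domCoprod.summand_mk'']
  rw [_root_.smul_apply, MultilinearMap.domDomCongr_apply, MultilinearMap.domCoprod_apply]
  rcases hj : σ.symm (finSumFinEquiv.symm i) with j | j
  · have h0 := hf (fun a => v (finSumFinEquiv (σ (Sum.inl a)))) j (by rw [← hj]; simpa using hi)
    have : (f : MultilinearMap ℝ (fun _ : Fin k => V) ℝ)
      (fun a => (v ∘ finSumFinEquiv) (σ (Sum.inl a))) = 0 := h0
    rw [this, TensorProduct.zero_tmul, smul_zero]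
  · have h0 := hg (fun a => v (finSumFinEquiv (σ (Sum.inr a)))) j (by rw [← hj]; simpa using hi)
    have : (g : MultilinearMap ℝ (fun _ : Fin l => V) ℝ)
      (fun a => (v ∘ finSumFinEquiv) (σ (Sum.inr a))) = 0 := h0
    rw [this, TensorProduct.tmul_zero, smul_zero]

theorem wpowF_kill (ω : V [⋀^Fin 2]→ₗ[ℝ] ℝ) (t : V) (h : ∀ v i, v i = t → ω v = 0) (n : ℕ) :
    ∀ v i, v i = t → wpowF ω n v = 0 := by
  induction n with
  | zero => intro v i; exact i.elim0
  | succ n ih => exact wedgeF_kill _ _ t ih h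

theorem top_eq_zero [FiniteDimensional ℝ V] {m : ℕ} (hm : Module.finrank ℝ V = m)
    (f : V [⋀^Fin m]→ₗ[ℝ] ℝ) (t : V) (ht : t ≠ 0) (h : ∀ v i, v i = t → f v = 0) : f = 0 := by
  ext v
  by_cases hv : LinearIndependent ℝ v
  · let b := basisOfLinearIndependentOfCardEqFinrank' v hv (by simp [hm])
    have hb : ∀ i, b i = v i := fun i => by simp [b]
    obtain ⟨j, hj⟩ : ∃ j, b.repr t j ≠ 0 := by
      by_contra! hc
      exact ht (b.repr.map_eq_zero_iff.mp (Finsupp.ext hc))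
    have h1 := h (Function.update v j t) j (by simp)
    rw [← b.sum_repr t, f.map_update_sum, Finset.sum_eq_single j] at h1
    · rw [hb, f.map_update_smul, Function.update_eq_self, smul_eq_mul] at h1
      simpa [hj] using h1
    · intro i _ hi
      rw [hb, f.map_update_smul, f.map_update_self _ hi.symm, smul_zero]
    · simp
  · simpa using f.map_linearDependent v hv

theorem functional_zero [FiniteDimensional ℝ L] [LieAlgebra.IsKilling ℝ L]
    (α : Module.Dual ℝ L) (h : ∀ x y : L, α ⁅x, y⁆ = 0) : α = 0 := by
  have hnd := LieAlgebra.IsKilling.killingForm_nondegenerate ℝ L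
  obtain ⟨a, rfl⟩ := (LinearMap.BilinForm.toDual (killingForm ℝ L) hnd).surjective α
  have ha : ∀ x : L, ⁅a, x⁆ = 0 := by
    intro x
    apply hnd.1
    intro y
    have := h x y
    rw [LinearMap.BilinForm.toDual_def] at this
    rw [LieModule.traceForm_apply_lie_apply]
    exact this
  have : a = 0 := by
    rw [← LieDerivation.IsKilling.ad_apply_eq_zero_iff ℝ L a]
    ext x
    simp [ha]
  rw [this, map_zero]

theorem exists_centralizing [FiniteDimensional ℝ L] (H : LieIdeal ℝ L)
    [LieAlgebra.IsKilling ℝ H] (ξ : L) : ∃ h : H, ∀ x : H, ⁅ξ - (h : L), (x : L)⁆ = 0 := by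
  let D : LieDerivation ℝ H H :=
    { toFun := fun x => ⁅ξ, x⁆
      map_add' := fun x y => lie_add _ _ _
      map_smul' := fun c x => lie_smul _ _ _
      leibniz' := fun x y => by
        apply Subtype.ext
        change ⁅ξ, ⁅(x : L), (y : L)⁆⁆ = ⁅(x : L), ⁅ξ, (y : L)⁆⁆ - ⁅(y : L), ⁅ξ, (x : L)⁆⁆
        rw [leibniz_lie ξ (x : L) (y : L), ← lie_skew ⁅ξ, (x : L)⁆ (y : L)]
        abel }
  obtain ⟨h, hh⟩ := LieDerivation.IsKilling.exists_eq_ad D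
  refine ⟨h, fun x => ?_⟩
  have := congrArg (Subtype.val) (LieDerivation.congr_fun hh x)
  have h2 : ⁅(h : L), (x : L)⁆ = ⁅ξ, (x : L)⁆ := by simpa using! this
  rw [sub_lie, h2, sub_self]

/-- a Lie algebra with a semisimple ideal of codimension 1 has no
symplectic form. -/
theorem stmt6 [FiniteDimensional ℝ L] (n : ℕ) (hn : 0 < n)
    (hdim : Module.finrank ℝ L = 2 * n) (H : LieIdeal ℝ L)
    [LieAlgebra.IsSemisimple ℝ H] (hH : Module.finrank ℝ H = 2 * n - 1) :
    ¬ ∃ ω : L [⋀^Fin 2]→ₗ[ℝ] ℝ, IsCEClosed ω ∧ wpowF ω n ≠ 0 := by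
  rintro ⟨ω, hc, hω⟩
  have : LieAlgebra.IsKilling ℝ H := inferInstance
  obtain ⟨ξ, hξ⟩ : ∃ ξ, ξ ∉ H := by
    by_contra! hall
    have : H.toSubmodule = ⊤ := by ext x; simpa using hall x
    have h2 : Module.finrank ℝ H.toSubmodule = 2 * n - 1 := hH
    rw [this, finrank_top, hdim] at h2
    omega
  obtain ⟨h, hh⟩ := exists_centralizing H ξ
  set t : L := ξ - (h : L) with ht
  have htH : t ∉ H := fun hm => hξ (by
    have := H.add_mem hm h.2
    simpa [ht] using this)
  have ht0 : t ≠ 0 := fun h0 => htH (h0 ▸ H.zero_mem)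
  let φ : Module.Dual ℝ L := ω.toMultilinearMap.toLinearMap ![0, t] 0
  have hφ : ∀ x, φ x = ω ![x, t] := fun x => by
    change ω (Function.update ![0, t] 0 x) = _
    congr 1
    ext i
    fin_cases i <;> simp
  have hφH : ∀ x : H, φ x = 0 := by
    have : φ.comp H.toSubmodule.subtype = 0 := by
      apply functional_zero (L := H)
      intro x y
      have h1 := hc x y t
      have hx : ⁅(x : L), t⁆ = 0 := by rw [← lie_skew, hh, neg_zero]
      have hy : ⁅(y : L), t⁆ = 0 := by rw [← lie_skew, hh, neg_zero]
      have hz : ∀ z : L, ω ![0, z] = 0 := fun z => ω.map_coord_zero 0 (by simp)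
      rw [hx, hy, hz, hz] at h1
      change φ (⁅x, y⁆ : H) = 0
      rw [hφ]
      simpa using h1
    intro x
    exact LinearMap.congr_fun this x
  have hker : LinearMap.ker φ = ⊤ := by
    have hlt : H.toSubmodule < LinearMap.ker φ := by
      refine lt_of_le_of_ne (fun x hx => hφH ⟨x, hx⟩) (fun he => htH ?_)
      have : t ∈ LinearMap.ker φ := by
        rw [LinearMap.mem_ker, hφ]
        exact ω.map_eq_zero_of_eq _ (i := 0) (j := 1) (by simp) (by simp)
      rw [← he] at this
      exact this
    have h1 := Submodule.finrank_lt_finrank_of_lt hlt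
    have h2 : Module.finrank ℝ H.toSubmodule = 2 * n - 1 := hH
    apply Submodule.eq_top_of_finrank_eq
    have h3 := Submodule.finrank_le (LinearMap.ker φ)
    omega
  have hk : ∀ x, ω ![x, t] = 0 := fun x => by
    rw [← hφ, ← LinearMap.mem_ker, hker]; trivial
  have hkill : ∀ v i, v i = t → ω v = 0 := by
    intro v i hi
    have h1 : ω v = -ω ![v 1, v 0] := by
      have := ω.map_swap v (i := 0) (j := 1) (by simp)
      rw [eq_neg_iff_add_eq_zero, add_comm, ← eq_neg_iff_add_eq_zero, ← this]
      congr 1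
      ext i
      fin_cases i <;> simp
    have h2 : v = ![v 0, v 1] := by
      ext i
      fin_cases i <;> simp
    fin_cases i
    · have : v 0 = t := hi
      rw [h1, this, hk, neg_zero]
    · have : v 1 = t := hi
      rw [h2, this, hk]
  exact hω (top_eq_zero hdim _ t ht0 (wpowF_kill ω t hkill n))
end

section
/- The Lie algebra sl(2,ℝ) is contact: there exists α ∈ sl(2,ℝ)* with α ∧ dα ≠ 0. Moreover there exist exactly two contact structures up to automorphism: one for which the Killing form restricted to ker α is definite, and one for which it is nondegenerate indefinite; and ker α is a subalgebra if and only if the Killing form restricted to ker α is degenerate. -/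
open scoped TensorProduct

variable {V : Type*} [AddCommGroup V] [Module ℝ V]

variable {L : Type*} [LieRing L] [LieAlgebra ℝ L]

noncomputable abbrev sl2Contact (α : Module.Dual ℝ (LieAlgebra.SpecialLinear.sl (Fin 2) ℝ)) :
    Prop :=
  wedgeF (oneAlt α) (ceD α) ≠ 0

/-- equivalence of contact structures under a Lie algebra automorphism -/
def sl2EquivContact (α β : Module.Dual ℝ (LieAlgebra.SpecialLinear.sl (Fin 2) ℝ)) : Prop :=
  ∃ (f : (LieAlgebra.SpecialLinear.sl (Fin 2) ℝ) ≃ₗ⁅ℝ⁆ (LieAlgebra.SpecialLinear.sl (Fin 2) ℝ))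
    (c : ℝ), c ≠ 0 ∧ ∀ x, α (f x) = c * β x

abbrev S2 := LieAlgebra.SpecialLinear.sl (Fin 2) ℝ

theorem wedge_formula (α : Module.Dual ℝ V) (ω : V [⋀^Fin 2]→ₗ[ℝ] ℝ) (v : Fin 3 → V) :
    wedgeF (oneAlt α) ω v = α (v 0) * ω ![v 1, v 2] - α (v 1) * ω ![v 0, v 2] + α (v 2) * ω ![v 0, v 1] := by
  have h := congrArg (fun F => (TensorProduct.lid ℝ ℝ) (F (fun i => v (finSumFinEquiv i)))) (MultilinearMap.domCoprod_alternization_eq (oneAlt α) ω)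
  have hsw : ∀ x y, ω ![y, x] = - ω ![x, y] := by
    intro x y
    have := ω.map_swap ![x, y] (i := 0) (j := 1) (by decide)
    rw [← this]
    congr 1
    ext i; fin_cases i <;> rfl
  have hv : ∀ w : Fin 2 → V, ω w = ω ![w 0, w 1] := by
    intro w; congr 1; ext i; fin_cases i <;> rfl
  have hr : (TensorProduct.lid ℝ ℝ) ((((Fintype.card (Fin 1)).factorial *
      (Fintype.card (Fin 2)).factorial) • (oneAlt α).domCoprod ω)
        (fun i => v (finSumFinEquiv i))) = 2 * wedgeF (oneAlt α) ω v := by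
    rw [AlternatingMap.smul_apply, map_nsmul]
    simp only [Fintype.card_fin, Nat.factorial, nsmul_eq_mul]
    have : wedgeF (oneAlt α) ω v = (TensorProduct.lid ℝ ℝ) (((oneAlt α).domCoprod ω)
        (fun i => v (finSumFinEquiv i))) := rfl
    rw [this]
    norm_num
  simp only [MultilinearMap.alternatization_apply] at h
  rw [hr] at h
  rw [← (Equiv.permCongr (finSumFinEquiv (m := 1) (n := 2))).symm.sum_comp] at h
  have hu : (Finset.univ : Finset (Equiv.Perm (Fin (1+2)))) = {1, Equiv.swap 0 1, Equiv.swap 0 2, Equiv.swap 1 2, Equiv.swap 0 1 * Equiv.swap 1 2, Equiv.swap 1 2 * Equiv.swap 0 1} := by decide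
  rw [hu] at h
  rw [Finset.sum_insert (by decide), Finset.sum_insert (by decide), Finset.sum_insert (by decide), Finset.sum_insert (by decide), Finset.sum_insert (by decide), Finset.sum_singleton] at h
  generalize wedgeF (oneAlt α) ω v = W at h ⊢
  simp [MultilinearMap.domCoprod_apply, oneAlt, hv] at h
  have e0 : finSumFinEquiv (Sum.inl 0 : Fin 1 ⊕ Fin 2) = (0 : Fin 3) := rfl
  have e1 : finSumFinEquiv (Sum.inr 0 : Fin 1 ⊕ Fin 2) = (1 : Fin 3) := rfl
  have e2 : finSumFinEquiv (Sum.inr 1 : Fin 1 ⊕ Fin 2) = (2 : Fin 3) := rfl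
  have s1 : Equiv.swap (0 : Fin 3) 1 2 = 2 := by decide
  have s2 : Equiv.swap (0 : Fin 3) 2 1 = 1 := by decide
  have s3 : Equiv.swap (1 : Fin 3) 2 0 = 0 := by decide
  simp only [e0, e1, e2, Equiv.swap_apply_left, Equiv.swap_apply_right, s1, s2, s3,
    Matrix.cons_val_zero, Matrix.cons_val_one] at h
  rw [hsw (v 1) (v 2), hsw (v 0) (v 1), hsw (v 0) (v 2)] at h
  linarith

noncomputable def mkS (a b c : ℝ) : S2 := ⟨!![a, b; c, -a], by
  simp [LieAlgebra.SpecialLinear.sl, Matrix.trace_fin_two] ⟩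

theorem eq_mkS (x : S2) : x = mkS (x.1 0 0) (x.1 0 1) (x.1 1 0) := by
  have h : Matrix.trace x.1 = 0 := x.2
  rw [Matrix.trace_fin_two] at h
  ext i j
  fin_cases i <;> fin_cases j <;> simp [mkS]
  linarith

theorem lie_mkS (a b c a2 b2 c2 : ℝ) : ⁅mkS a b c, mkS a2 b2 c2⁆ =
    mkS (b * c2 - b2 * c) (2 * (a * b2 - a2 * b)) (2 * (c * a2 - c2 * a)) := by
  apply Subtype.ext
  rw [LieAlgebra.SpecialLinear.sl_bracket]
  ext i j
  fin_cases i <;> fin_cases j <;> simp [mkS] <;> ring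

noncomputable def eS : S2 ≃ₗ[ℝ] (Fin 3 → ℝ) where
  toFun x := ![x.1 0 0, x.1 0 1, x.1 1 0]
  invFun w := mkS (w 0) (w 1) (w 2)
  map_add' x y := by ext i; fin_cases i <;> simp
  map_smul' c x := by ext i; fin_cases i <;> simp
  left_inv x := (eq_mkS x).symm
  right_inv w := by ext i; fin_cases i <;> simp [mkS]

theorem dual_mkS (α : Module.Dual ℝ S2) (a b c : ℝ) : α (mkS a b c) =
    α (mkS 1 0 0) * a + α (mkS 0 1 0) * b + α (mkS 0 0 1) * c := by
  have : mkS a b c = a • mkS 1 0 0 + b • mkS 0 1 0 + c • mkS 0 0 1 := by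
    ext i j
    fin_cases i <;> fin_cases j <;> simp [mkS]
  rw [this]; simp; ring

theorem killing_mkS (a b c a2 b2 c2 : ℝ) : killingForm ℝ S2 (mkS a b c) (mkS a2 b2 c2) =
    8 * a * a2 + 4 * b * c2 + 4 * c * b2 := by
  rw [killingForm_apply_apply, LinearMap.trace_eq_matrix_trace ℝ (Module.Basis.ofEquivFun eS),
    Matrix.trace, Fin.sum_univ_three]
  simp only [Matrix.diag_apply, LinearMap.toMatrix_apply, Module.Basis.coe_ofEquivFun,
    LinearMap.comp_apply, LieAlgebra.ad_apply, Module.Basis.ofEquivFun_repr_apply]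
  have h0 : eS.symm (Pi.single 0 1) = mkS 1 0 0 := by
    show mkS _ _ _ = _
    simp
  have h1 : eS.symm (Pi.single 1 1) = mkS 0 1 0 := by
    show mkS _ _ _ = _
    simp
  have h2 : eS.symm (Pi.single 2 1) = mkS 0 0 1 := by
    show mkS _ _ _ = _
    simp
  rw [h0, h1, h2]
  simp only [lie_mkS]
  simp [eS, mkS]
  ring

theorem conj_equiv (g : Matrix (Fin 2) (Fin 2) ℝ) (hg : g.det ≠ 0) :
    ∃ f : S2 ≃ₗ⁅ℝ⁆ S2, ∀ x, (f x).1 = g * x.1 * g⁻¹ := by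
  have hu : IsUnit g.det := isUnit_iff_ne_zero.mpr hg
  let i := Matrix.invertibleOfIsUnitDet g hu
  have key : ∀ x : Matrix (Fin 2) (Fin 2) ℝ, x ∈ LieAlgebra.SpecialLinear.sl (Fin 2) ℝ ↔ x.trace = 0 :=
    fun x => Iff.rfl
  letI : LieRing (Matrix (Fin 2) (Fin 2) ℝ) := LieRing.ofAssociativeRing
  refine ⟨(Matrix.lieConj g i).ofSubalgebras _ _ ?_, fun x => ?_⟩
  · ext y
    rw [LieSubalgebra.mem_map]
    constructor
    · rintro ⟨x, hx, rfl⟩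
      rw [key] at *
      show Matrix.trace (Matrix.lieConj g i x) = 0
      rw [Matrix.lieConj_apply, Matrix.trace_mul_cycle, Matrix.nonsing_inv_mul _ hu, one_mul, hx]
    · intro hy
      refine ⟨g⁻¹ * y * g, ?_, ?_⟩
      · rw [key] at *
        rw [Matrix.trace_mul_cycle, Matrix.mul_nonsing_inv _ hu, one_mul, hy]
      · show Matrix.lieConj g i _ = _
        rw [Matrix.lieConj_apply]
        simp only [← mul_assoc, Matrix.mul_nonsing_inv _ hu, one_mul]
        rw [mul_assoc, Matrix.mul_nonsing_inv _ hu, mul_one]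
  · rw [LieEquiv.ofSubalgebras_apply, Matrix.lieConj_apply]

theorem contact_iff (α : Module.Dual ℝ S2) : sl2Contact α ↔
    α (mkS 1 0 0) ^ 2 + 4 * α (mkS 0 1 0) * α (mkS 0 0 1) ≠ 0 := by
  have hd : ∀ x y, ceD α ![x, y] = - α ⁅x, y⁆ := fun x y => rfl
  unfold sl2Contact
  rw [not_iff_not]
  constructor
  · intro h
    have := congrArg (fun F => F ![mkS 1 0 0, mkS 0 1 0, mkS 0 0 1]) h
    simp only [AlternatingMap.zero_apply] at this
    erw [wedge_formula] at this
    simp [hd, lie_mkS] at this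
    rw [dual_mkS α 0 2 0, dual_mkS α 0 0 (-2)] at this
    linarith
  · intro h
    ext v
    erw [wedge_formula]
    rw [hd, hd, hd, eq_mkS (v 0), eq_mkS (v 1), eq_mkS (v 2)]
    generalize (v 0).1 0 0 = a0
    generalize (v 0).1 0 1 = b0
    generalize (v 0).1 1 0 = c0
    generalize (v 1).1 0 0 = a1
    generalize (v 1).1 0 1 = b1
    generalize (v 1).1 1 0 = c1
    generalize (v 2).1 0 0 = a2
    generalize (v 2).1 0 1 = b2
    generalize (v 2).1 1 0 = c2
    simp only [lie_mkS]
    rw [dual_mkS α a0, dual_mkS α a1, dual_mkS α a2, dual_mkS α (_ - _), dual_mkS α (b0 * c2 - _),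
      dual_mkS α (b0 * c1 - _)]
    generalize α (mkS 1 0 0) = p at *
    generalize α (mkS 0 1 0) = q at *
    generalize α (mkS 0 0 1) = r at *
    rw [AlternatingMap.zero_apply]
    linear_combination (-(a0 * (b1 * c2 - b2 * c1) - a1 * (b0 * c2 - b2 * c0)
      + a2 * (b0 * c1 - b1 * c0))) * h

noncomputable def dS (s : ℝ) : Module.Dual ℝ S2 where
  toFun x := x.1 0 1 + s * x.1 1 0
  map_add' x y := by simp; ring
  map_smul' c x := by simp; ring

theorem dS_mkS (s a b c : ℝ) : dS s (mkS a b c) = b + s * c := by simp [dS, mkS]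

theorem forall_mkS {P : S2 → Prop} : (∀ x, P x) ↔ ∀ a b c, P (mkS a b c) :=
  ⟨fun h _ _ _ => h _, fun h x => eq_mkS x ▸ h _ _ _⟩

theorem mkS_eq_zero (a b c : ℝ) : mkS a b c = 0 ↔ a = 0 ∧ b = 0 ∧ c = 0 := by
  constructor
  · intro h
    have hh : (mkS a b c).1 = 0 := by rw [h]; rfl
    refine ⟨?_, ?_, ?_⟩
    · simpa [mkS] using congrFun (congrFun hh 0) 0
    · simpa [mkS] using congrFun (congrFun hh 0) 1
    · simpa [mkS] using congrFun (congrFun hh 1) 0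
  · rintro ⟨rfl, rfl, rfl⟩
    ext i j
    fin_cases i <;> fin_cases j <;> simp [mkS]

theorem classify (α : Module.Dual ℝ S2) (s t : ℝ) (ht : t ≠ 0)
    (h : α (mkS 1 0 0) ^ 2 + 4 * α (mkS 0 1 0) * α (mkS 0 0 1) = 4 * s * t ^ 2) (hs : s ≠ 0) :
    sl2EquivContact α (dS s) := by
  have hα := dual_mkS α
  generalize α (mkS 1 0 0) = p at *
  generalize α (mkS 0 1 0) = q at *
  generalize α (mkS 0 0 1) = r at *
  have hD : p ^ 2 + 4 * q * r ≠ 0 := by rw [h]; positivity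
  obtain ⟨u, w, huw⟩ : ∃ u w : ℝ, q * u ^ 2 - p * u * w - r * w ^ 2 ≠ 0 := by
    by_contra! hc
    have h1 := hc 1 0
    have h2 := hc 0 1
    have h3 := hc 1 1
    have hq : q = 0 := by linarith
    have hr : r = 0 := by linarith
    have hp : p = 0 := by linarith
    simp [hp, hq] at hD
  set g : Matrix (Fin 2) (Fin 2) ℝ := !![u, (p / 2 * u + r * w) / t; w, (q * u - p / 2 * w) / t]
    with hg
  have hdet : g.det = (q * u ^ 2 - p * u * w - r * w ^ 2) / t := by
    rw [hg, Matrix.det_fin_two_of]; ring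
  have hdet0 : g.det ≠ 0 := by rw [hdet]; positivity
  obtain ⟨f, hf⟩ := conj_equiv g hdet0
  refine ⟨f, t, ht, ?_⟩
  rw [forall_mkS]
  intro a b c
  rw [dS_mkS, eq_mkS (f _), hα, hf, Matrix.inv_def, hdet, Ring.inverse_eq_inv', hg,
    Matrix.adjugate_fin_two_of]
  simp [mkS]
  have hN : u * (u * q - p * w) - r * w ^ 2 ≠ 0 := by
    intro h0; apply huw; linear_combination h0
  field_simp
  linear_combination c * (u * (u * q - p * w) - r * w ^ 2) * h

theorem dual_ne_zero (α : Module.Dual ℝ S2) (h : α ≠ 0) {X : ℝ} (h1 : α (mkS 1 0 0) * X = 0)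
    (h2 : α (mkS 0 1 0) * X = 0) (h3 : α (mkS 0 0 1) * X = 0) : X = 0 := by
  by_contra hX
  apply h
  ext x
  have h1' := (mul_eq_zero.mp h1).resolve_right hX
  have h2' := (mul_eq_zero.mp h2).resolve_right hX
  have h3' := (mul_eq_zero.mp h3).resolve_right hX
  rw [eq_mkS x, dual_mkS, h1', h2', h3']
  simp

theorem subalg_iff (α : Module.Dual ℝ S2) (h : α ≠ 0) :
    (∀ x y, α x = 0 → α y = 0 → α ⁅x, y⁆ = 0) ↔
      α (mkS 1 0 0) ^ 2 + 4 * α (mkS 0 1 0) * α (mkS 0 0 1) = 0 := by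
  have hα := dual_mkS α
  have hn := fun X => dual_ne_zero α h (X := X)
  simp only [forall_mkS, lie_mkS]
  generalize α (mkS 1 0 0) = p at *
  generalize α (mkS 0 1 0) = q at *
  generalize α (mkS 0 0 1) = r at *
  simp only [hα]
  constructor
  · intro H
    apply hn
    · linear_combination H q (-p) 0 r 0 (-p) (by ring) (by ring)
    · linear_combination H q (-p) 0 0 r (-q) (by ring) (by ring)
    · linear_combination H r 0 (-p) 0 r (-q) (by ring) (by ring)
  · intro hD a b c a2 b2 c2 hx hy
    apply hn
    · linear_combination (b*c2-b2*c)*hD - (-2*q*b2+2*r*c2) * hx - (2*q*b-2*r*c)*hy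
    · linear_combination (c*a2-a*c2)*hD - (-p*c2+2*q*a2) * hx - (p*c-2*q*a)*hy
    · linear_combination (a*b2-a2*b)*hD - (p*b2-2*r*a2) * hx - (-p*b+2*r*a)*hy

theorem degen_iff (α : Module.Dual ℝ S2) (h : α ≠ 0) :
    (∃ x, α x = 0 ∧ x ≠ 0 ∧ ∀ y, α y = 0 → killingForm ℝ S2 x y = 0) ↔
      α (mkS 1 0 0) ^ 2 + 4 * α (mkS 0 1 0) * α (mkS 0 0 1) = 0 := by
  have hα := dual_mkS α
  have hn := fun X => dual_ne_zero α h (X := X)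
  simp only [forall_mkS]
  generalize α (mkS 1 0 0) = p at *
  generalize α (mkS 0 1 0) = q at *
  generalize α (mkS 0 0 1) = r at *
  constructor
  · rintro ⟨x, hx, hx0, H⟩
    rw [eq_mkS x] at hx hx0 H
    generalize x.1 0 0 = a at *
    generalize x.1 0 1 = b at *
    generalize x.1 1 0 = c at *
    simp only [hα, killing_mkS] at hx H
    have e1 := H r 0 (-p) (by ring)
    have e2 := H q (-p) 0 (by ring)
    have e3 := H 0 r (-q) (by ring)
    by_contra hD
    apply hx0
    rw [mkS_eq_zero]
    refine ⟨?_, ?_, ?_⟩ <;> apply (mul_eq_zero.mp ?_).resolve_left hD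
    · linear_combination p * hx + q / 4 * e1 + r / 4 * e2
    · linear_combination 2 * r * hx - p / 4 * e1 - r / 2 * e3
    · linear_combination 2 * q * hx - p / 4 * e2 + q / 2 * e3
  · intro hD
    refine ⟨mkS (p / 2) r q, ?_, ?_, ?_⟩
    · rw [hα]; linear_combination hD / 2
    · rw [Ne, mkS_eq_zero]
      rintro ⟨h1, h2, h3⟩
      have := hn 1 (by linarith) (by linarith) (by linarith)
      norm_num at this
    · intro a b c hy
      rw [hα] at hy
      rw [killing_mkS]
      linear_combination 4 * hy


/-- contact structures on sl(2,ℝ). -/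
theorem stmt8 :
    letI L := LieAlgebra.SpecialLinear.sl (Fin 2) ℝ
    letI k := killingForm ℝ L
    (∃ α : Module.Dual ℝ L, sl2Contact α) ∧
    (∃ α₁ α₂ : Module.Dual ℝ L, sl2Contact α₁ ∧ sl2Contact α₂ ∧
      (∀ x, α₁ x = 0 → x ≠ 0 → 0 < k x x) ∧
      ((∃ x, α₂ x = 0 ∧ k x x < 0) ∧ (∃ x, α₂ x = 0 ∧ 0 < k x x) ∧
        (∀ x, α₂ x = 0 → (∀ y, α₂ y = 0 → k x y = 0) → x = 0)) ∧
      ¬ sl2EquivContact α₁ α₂ ∧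
      (∀ α, sl2Contact α → sl2EquivContact α α₁ ∨ sl2EquivContact α α₂)) ∧
    (∀ α : Module.Dual ℝ L, α ≠ 0 →
      ((∀ x y, α x = 0 → α y = 0 → α ⁅x, y⁆ = 0) ↔
        ∃ x, α x = 0 ∧ x ≠ 0 ∧ ∀ y, α y = 0 → k x y = 0)) := by
  have hc : ∀ s : ℝ, s ≠ 0 → sl2Contact (dS s) := by
    intro s hs
    rw [contact_iff, dS_mkS, dS_mkS, dS_mkS]
    simpa using hs
  have hpos : ∀ x, dS (-1) x = 0 → x ≠ 0 → 0 < killingForm ℝ S2 x x := by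
    rw [forall_mkS]
    intro a b c hx hx0
    rw [dS_mkS] at hx
    have hb : b = c := by linarith
    subst hb
    rw [killing_mkS]
    rw [Ne, mkS_eq_zero] at hx0
    by_contra! hle
    apply hx0
    have ha : a = 0 := by nlinarith [sq_nonneg a, sq_nonneg b]
    have hb : b = 0 := by nlinarith [sq_nonneg a, sq_nonneg b]
    exact ⟨ha, hb, hb⟩
  have hneg : dS 1 (mkS 0 1 (-1)) = 0 ∧ killingForm ℝ S2 (mkS 0 1 (-1)) (mkS 0 1 (-1)) < 0 := by
    rw [dS_mkS, killing_mkS]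
    norm_num
  refine ⟨⟨dS 1, hc 1 one_ne_zero⟩, ⟨dS (-1), dS 1, hc (-1) (by norm_num), hc 1 one_ne_zero, hpos,
    ⟨⟨_, hneg⟩, ⟨mkS 1 0 0, ?_, ?_⟩, ?_⟩, ?_, ?_⟩, ?_⟩
  · rw [dS_mkS]; norm_num
  · rw [killing_mkS]; norm_num
  · intro x hx H
    by_contra hx0
    have hne : dS 1 ≠ 0 := by
      intro h0
      have := dS_mkS 1 0 1 0
      rw [h0] at this
      simp at this
    have := (degen_iff (dS 1) hne).mp ⟨x, hx, hx0, H⟩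
    rw [dS_mkS, dS_mkS, dS_mkS] at this
    norm_num at this
  · rintro ⟨f, c, hc0, hf⟩
    have h1 := hf (mkS 0 1 (-1))
    rw [hneg.1, mul_zero] at h1
    have h2 := hneg.2
    have h3 := hpos _ h1 (by
      intro h0
      rw [← LieAlgebra.killingForm_of_equiv_apply f, h0] at h2
      simp at h2)
    rw [LieAlgebra.killingForm_of_equiv_apply] at h3
    linarith
  · intro α hα
    rw [contact_iff] at hα
    set D := α (mkS 1 0 0) ^ 2 + 4 * α (mkS 0 1 0) * α (mkS 0 0 1) with hD
    rcases lt_or_gt_of_ne hα with h | h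
    · left
      have hh : 0 < -D / 4 := by linarith
      refine classify α (-1) (Real.sqrt (-D / 4)) (Real.sqrt_pos.mpr hh).ne' ?_ (by norm_num)
      rw [Real.sq_sqrt hh.le, ← hD]; ring
    · right
      have hh : 0 < D / 4 := by linarith
      refine classify α 1 (Real.sqrt (D / 4)) (Real.sqrt_pos.mpr hh).ne' ?_ (by norm_num)
      rw [Real.sq_sqrt hh.le, ← hD]; ring
  · intro α hα
    exact (subalg_iff α hα).trans (degen_iff α hα).symm
end
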